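/- arXiv:2602.23290 — 2 statements merged into one kernel-verified Lean document; each statement's English description precedes it below -/
import Mathlib

section
/- (Whitney's Theorem.) Let G and H be connected finite simple graphs. If the line graph L(G) is isomorphic to the line graph L(H), then G is isomorphic to H, unless one of G, H is isomorphic to the triangle K₃ (the complete graph on 3 vertices) and the other is isomorphic to the star K₁,₃ (the complete bipartite graph with parts of sizes 1 and 3). -/
/-!
Whitney's theorem. Transporting the edges of `H` to `G` along the isomorphism of line graphs gives
one edge set `E` with two incidence relations, `I` to the vertices of `G` and `J` to those of `H`,
such that two edges meet with respect to `I` iff they meet with respect to `J`.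

Suppose first that three edges with a common vertex on one side always have a common vertex on the
other side (`StarsToStars` in both directions). Then the set of edges at a vertex of degree at least
two is exactly the set of edges at some vertex of the other side (`exists_star_of_two`); connectivity
extends this to vertices of degree one (`exists_star`), and with at least two edges a vertex is
determined by its set of edges (`eq_of_same_star`). Matching vertices with equal edge sets is the
isomorphism (`exists_equiv_of_stars`).

Otherwise, up to exchanging the sides, a claw with centre `v` and leaves `a`, `b`, `c` corresponds
to a triangle `x`, `y`, `z`. A further edge meets the triangle in at most one vertex, so it meets
none or exactly two of the three edges; hence it avoids `v`, and if it meets the claw at all it is a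
side of `abc`. By connectivity `G` lives on `{v, a, b, c}`. If there is no further edge, `G` is
`K₁,₃` and `H` is `K₃`. If `bc` is an edge, it corresponds to an edge `xw`; every other
further edge meets it and so ends in `w`. Then `v, a, b, c ↦ x, w, z, y` is an isomorphism
(`ClawTriangle.equiv_of_side`).
-/

open SimpleGraph

namespace Whitney

variable {V W E : Type}

/-- `I v e` (read: `v` is an endpoint of the edge `e`) is the incidence relation of a connected
simple graph with vertex type `V` and edges labelled by `E`. The field `conn` is connectivity, in the
form of induction along edges. -/
structure EdgeIncidence (I : V → E → Prop) : Prop where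
  two : ∀ e, ∃ u v, u ≠ v ∧ ∀ x, I x e ↔ x = u ∨ x = v
  simple : ∀ u v e f, u ≠ v → I u e → I v e → I u f → I v f → e = f
  conn : ∀ P : V → Prop, (∃ v, P v) → (∀ u v e, I u e → I v e → P u → P v) → ∀ v, P v
  nonempty : Nonempty V

/-- Two edges share an endpoint with respect to `I` iff they do with respect to `J`: the two
incidence relations have the same line graph. -/
def SameMeet (I : V → E → Prop) (J : W → E → Prop) : Prop :=
  ∀ e f, (∃ v, I v e ∧ I v f) ↔ ∃ w, J w e ∧ J w f

/-- Three distinct edges with a common `I`-endpoint have a common `J`-endpoint. -/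
def StarsToStars (I : V → E → Prop) (J : W → E → Prop) : Prop :=
  ∀ e₁ e₂ e₃, e₁ ≠ e₂ → e₁ ≠ e₃ → e₂ ≠ e₃ → (∃ v, I v e₁ ∧ I v e₂ ∧ I v e₃) →
    ∃ w, J w e₁ ∧ J w e₂ ∧ J w e₃

/-- The adjacency relation of the graph with incidence relation `I`. -/
def IncAdj (I : V → E → Prop) (u v : V) : Prop := u ≠ v ∧ ∃ e, I u e ∧ I v e

variable {I : V → E → Prop} {J : W → E → Prop}

lemma SameMeet.symm (h : SameMeet I J) : SameMeet J I := fun e f => (h e f).symm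

lemma EdgeIncidence.other (hI : EdgeIncidence I) {u : V} {e : E} (h : I u e) :
    ∃ v, v ≠ u ∧ I v e ∧ ∀ x, I x e → x = u ∨ x = v := by
  obtain ⟨p, q, hpq, hx⟩ := hI.two e
  rcases (hx u).1 h with rfl | rfl
  · exact ⟨q, hpq.symm, (hx q).2 (Or.inr rfl), fun x h => (hx x).1 h⟩
  · exact ⟨p, hpq, (hx p).2 (Or.inl rfl), fun x h => ((hx x).1 h).symm⟩

lemma EdgeIncidence.eq_of_two (hI : EdgeIncidence I) {u v : V} {e f : E} (hef : e ≠ f)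
    (h1 : I u e) (h2 : I u f) (h3 : I v e) (h4 : I v f) : u = v := by
  by_contra h
  exact hef (hI.simple u v e f h h1 h3 h2 h4)

lemma EdgeIncidence.endpoints (hI : EdgeIncidence I) {u v x : V} {e : E} (huv : u ≠ v)
    (hu : I u e) (hv : I v e) (hx : I x e) : x = u ∨ x = v := by
  obtain ⟨p, q, hpq, h⟩ := hI.two e
  have := (h u).1 hu
  have := (h v).1 hv
  have := (h x).1 hx
  grind

/-! ### Vertices with the same edges -/

/-- For a vertex `v` with two edges, the matching `w` is the vertex at which these two edges
meet on the other side. -/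
lemma exists_star_of_two (hI : EdgeIncidence I) (hJ : EdgeIncidence J) (hM : SameMeet I J)
    (h1 : StarsToStars I J) (h2 : StarsToStars J I) {v : V} {e₁ e₂ : E} (hne : e₁ ≠ e₂)
    (hv1 : I v e₁) (hv2 : I v e₂) : ∃ w, ∀ e, I v e ↔ J w e := by
  obtain ⟨w, hw1, hw2⟩ := (hM e₁ e₂).1 ⟨v, hv1, hv2⟩
  refine ⟨w, fun e => ?_⟩
  by_cases h : e₁ = e
  · subst h; tauto
  by_cases h' : e₂ = e
  · subst h'; tauto
  constructor
  · intro hv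
    obtain ⟨w', a, b, c⟩ := h1 e₁ e₂ e hne h h' ⟨v, hv1, hv2, hv⟩
    rwa [hJ.eq_of_two hne hw1 hw2 a b]
  · intro hw
    obtain ⟨v', a, b, c⟩ := h2 e₁ e₂ e hne h h' ⟨w, hw1, hw2, hw⟩
    rwa [hI.eq_of_two hne hv1 hv2 a b]

lemma exists_second_edge (hI : EdgeIncidence I) (hE : ∃ e f : E, e ≠ f) {u v : V} {e : E}
    (huv : u ≠ v) (hu : I u e) (hv : I v e) : ∃ f, f ≠ e ∧ (I u f ∨ I v f) := by
  by_contra! hcon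
  have hall : ∀ x, x = u ∨ x = v := by
    refine hI.conn (fun x => x = u ∨ x = v) ⟨u, Or.inl rfl⟩ ?_
    intro p q f hp hq hpp
    have hf : f = e := by grind
    subst hf
    exact hI.endpoints huv hu hv hq
  obtain ⟨g, g', hg⟩ := hE
  have key : ∀ f, f = e := by
    intro f
    obtain ⟨p, q, hpq, h⟩ := hI.two f
    have := (h p).2 (Or.inl rfl)
    have := hall p
    grind
  exact hg ((key g).trans (key g').symm)

lemma exists_edge (hI : EdgeIncidence I) (hE : Nonempty E) (v : V) : ∃ e, I v e := by
  by_contra! hcon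
  have hall : ∀ x, x = v := by
    refine hI.conn (fun x => x = v) ⟨v, rfl⟩ ?_
    rintro p q f hp hq rfl
    exact absurd hp (hcon f)
  obtain ⟨g⟩ := hE
  obtain ⟨p, q, hpq, -⟩ := hI.two g
  exact hpq ((hall p).trans (hall q).symm)

/-- The remaining case is a leaf `v` with edge `uv`: the neighbour `u` has a second edge, so it
matches some `w₀`, and `v` matches the other endpoint of the edge on the `J` side. -/
lemma exists_star (hI : EdgeIncidence I) (hJ : EdgeIncidence J) (hM : SameMeet I J)
    (h1 : StarsToStars I J) (h2 : StarsToStars J I) (hE : ∃ e f : E, e ≠ f) (v : V) :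
    ∃ w, ∀ e, I v e ↔ J w e := by
  obtain ⟨e, hve⟩ := exists_edge hI ⟨hE.choose⟩ v
  by_cases hf : ∃ f, f ≠ e ∧ I v f
  · obtain ⟨f, hfe, hvf⟩ := hf
    exact exists_star_of_two hI hJ hM h1 h2 hfe hvf hve
  push Not at hf
  obtain ⟨u, huv, hue, -⟩ := hI.other hve
  obtain ⟨f, hfe, hf'⟩ := exists_second_edge hI hE huv.symm hve hue
  have huf : I u f := hf'.resolve_left (hf f hfe)
  obtain ⟨w₀, hw₀⟩ := exists_star_of_two hI hJ hM h1 h2 hfe huf hue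
  obtain ⟨w, hww, hwe, -⟩ := hJ.other ((hw₀ e).1 hue)
  refine ⟨w, fun g => ?_⟩
  by_cases hge : g = e
  · subst hge; tauto
  refine ⟨fun h => absurd h (hf g hge), fun h => ?_⟩
  -- `w` would have two edges, so its star would be that of an endpoint of `e`, necessarily `u`
  obtain ⟨v', hv'⟩ := exists_star_of_two hJ hI hM.symm h2 h1 hge h hwe
  have hv'e := (hv' e).1 hwe
  have hv'g := (hv' g).1 h
  rcases hI.endpoints huv hue hve hv'e with rfl | rfl
  · exact absurd (hJ.eq_of_two hge h hwe ((hw₀ g).1 hv'g) ((hw₀ e).1 hue)) hww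
  · exact hv'g

lemma eq_of_same_star (hI : EdgeIncidence I) (hE : ∃ e f : E, e ≠ f) {u v : V}
    (h : ∀ e, I u e ↔ I v e) : u = v := by
  by_contra huv
  obtain ⟨e, he⟩ := exists_edge hI ⟨hE.choose⟩ u
  obtain ⟨f, hfe, hf⟩ := exists_second_edge hI hE huv he ((h e).1 he)
  have huf : I u f := hf.elim id (h f).2
  exact hfe (hI.simple u v f e huv huf ((h f).1 huf) he ((h e).1 he))

/-- Two relations that agree under bijective labellings by a common type are isomorphic. -/
lemma equiv_of_labels {α : Type} {A : V → V → Prop} {B : W → W → Prop} (f : α → V) (g : α → W)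
    (hf : Function.Bijective f) (hg : Function.Bijective g)
    (h : ∀ i j, A (f i) (f j) ↔ B (g i) (g j)) :
    ∃ σ : V ≃ W, ∀ u v, A u v ↔ B (σ u) (σ v) := by
  refine ⟨(Equiv.ofBijective f hf).symm.trans (Equiv.ofBijective g hg), fun u v => ?_⟩
  obtain ⟨i, rfl⟩ := hf.2 u
  obtain ⟨j, rfl⟩ := hf.2 v
  have hs : ∀ i, (Equiv.ofBijective f hf).symm (f i) = i := fun i =>
    (Equiv.ofBijective f hf).symm_apply_apply i
  simpa [hs] using h i j

lemma bijective_vec4 {v a b c : V} (h : v ≠ a ∧ v ≠ b ∧ v ≠ c ∧ a ≠ b ∧ a ≠ c ∧ b ≠ c)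
    (hall : ∀ x, x = v ∨ x = a ∨ x = b ∨ x = c) : Function.Bijective ![v, a, b, c] := by
  constructor
  · intro i j hij
    fin_cases i <;> fin_cases j <;> simp_all
  · intro x
    rcases hall x with rfl | rfl | rfl | rfl
    exacts [⟨0, rfl⟩, ⟨1, rfl⟩, ⟨2, rfl⟩, ⟨3, rfl⟩]

lemma bijective_vec3 {a b c : V} (h : a ≠ b ∧ a ≠ c ∧ b ≠ c)
    (hall : ∀ x, x = a ∨ x = b ∨ x = c) : Function.Bijective ![a, b, c] := by
  constructor
  · intro i j hij
    fin_cases i <;> fin_cases j <;> simp_all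
  · intro x
    rcases hall x with rfl | rfl | rfl
    exacts [⟨0, rfl⟩, ⟨1, rfl⟩, ⟨2, rfl⟩]

/-- With at most one edge a vertex need not be determined by its edges, but then both graphs are
single vertices or both are single edges. -/
lemma exists_equiv_of_few_edges (hI : EdgeIncidence I) (hJ : EdgeIncidence J)
    (hE : ∀ e f : E, e = f) :
    ∃ σ : V ≃ W, ∀ u v, IncAdj I u v ↔ IncAdj J (σ u) (σ v) := by
  rcases isEmpty_or_nonempty E with hemp | ⟨⟨e⟩⟩
  · have key : ∀ {V : Type} {I : V → E → Prop}, EdgeIncidence I →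
        ∃ p : V, Function.Bijective (fun _ : Unit => p) := by
      intro V I hI
      obtain ⟨p⟩ := hI.nonempty
      refine ⟨p, fun _ _ _ => rfl, fun x => ⟨(), ?_⟩⟩
      exact (hI.conn (fun x => x = p) ⟨p, rfl⟩ (fun _ _ e => isEmptyElim e) x).symm
    obtain ⟨p, hp⟩ := key hI
    obtain ⟨q, hq⟩ := key hJ
    exact equiv_of_labels _ _ hp hq (fun i j => by simp [IncAdj])
  · have key : ∀ {V : Type} {I : V → E → Prop}, EdgeIncidence I →
        ∃ f : Bool → V, Function.Bijective f ∧ ∀ i j, IncAdj I (f i) (f j) ↔ i ≠ j := by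
      intro V I hI
      obtain ⟨p, q, hpq, hx⟩ := hI.two e
      have hp := (hx p).2 (Or.inl rfl)
      have hq := (hx q).2 (Or.inr rfl)
      have hall : ∀ x, x = p ∨ x = q := by
        refine hI.conn (fun x => x = p ∨ x = q) ⟨p, Or.inl rfl⟩ ?_
        intro u v f _ hv _
        rw [hE f e] at hv
        exact (hx v).1 hv
      refine ⟨fun i => if i then p else q, ⟨?_, ?_⟩, ?_⟩
      · intro i j
        cases i <;> cases j <;> simp [hpq, hpq.symm]
      · intro x
        rcases hall x with rfl | rfl
        exacts [⟨true, rfl⟩, ⟨false, rfl⟩]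
      · intro i j
        cases i <;> cases j <;> simp [IncAdj, hpq, hpq.symm] <;> exact ⟨e, by tauto⟩
    obtain ⟨f, hf, hf'⟩ := key hI
    obtain ⟨g, hg, hg'⟩ := key hJ
    exact equiv_of_labels f g hf hg (fun i j => (hf' i j).trans (hg' i j).symm)

theorem exists_equiv_of_stars (hI : EdgeIncidence I) (hJ : EdgeIncidence J) (hM : SameMeet I J)
    (h1 : StarsToStars I J) (h2 : StarsToStars J I) :
    ∃ σ : V ≃ W, ∀ u v, IncAdj I u v ↔ IncAdj J (σ u) (σ v) := by
  by_cases hE : ∃ e f : E, e ≠ f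
  swap
  · push Not at hE
    exact exists_equiv_of_few_edges hI hJ hE
  choose f hf using exists_star hI hJ hM h1 h2 hE
  choose g hg using exists_star hJ hI hM.symm h2 h1 hE
  let σ : V ≃ W :=
    { toFun := f
      invFun := g
      left_inv := fun v => eq_of_same_star hI hE fun e => ((hf v e).trans (hg _ e)).symm
      right_inv := fun w => eq_of_same_star hJ hE fun e => ((hg w e).trans (hf _ e)).symm }
  refine ⟨σ, fun u v => ?_⟩
  have hσ : ∀ v e, J (σ v) e ↔ I v e := fun v e => (hf v e).symm
  simp [IncAdj, hσ]

/-! ### A star mapped to a triangle -/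

/-- The edges `e₁ = va`, `e₂ = vb`, `e₃ = vc` form a claw with respect to `I` and a triangle
`e₁ = yz`, `e₂ = xz`, `e₃ = xy` with respect to `J`. -/
structure ClawTriangle (I : V → E → Prop) (J : W → E → Prop) (v a b c : V) (x y z : W)
    (e₁ e₂ e₃ : E) : Prop where
  ne_edges : e₁ ≠ e₂ ∧ e₁ ≠ e₃ ∧ e₂ ≠ e₃
  ne_left : v ≠ a ∧ v ≠ b ∧ v ≠ c ∧ a ≠ b ∧ a ≠ c ∧ b ≠ c
  ne_right : x ≠ y ∧ x ≠ z ∧ y ≠ z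
  inc₁ : ∀ u, I u e₁ ↔ u = v ∨ u = a
  inc₂ : ∀ u, I u e₂ ↔ u = v ∨ u = b
  inc₃ : ∀ u, I u e₃ ↔ u = v ∨ u = c
  jnc₁ : ∀ u, J u e₁ ↔ u = y ∨ u = z
  jnc₂ : ∀ u, J u e₂ ↔ u = x ∨ u = z
  jnc₃ : ∀ u, J u e₃ ↔ u = x ∨ u = y

lemma exists_clawTriangle (hI : EdgeIncidence I) (hJ : EdgeIncidence J) (hM : SameMeet I J)
    (h1 : ¬ StarsToStars I J) :
    ∃ v a b c x y z e₁ e₂ e₃, ClawTriangle I J v a b c x y z e₁ e₂ e₃ := by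
  unfold StarsToStars at h1
  push Not at h1
  obtain ⟨e₁, e₂, e₃, h12, h13, h23, ⟨v, hv1, hv2, hv3⟩, hno⟩ := h1
  obtain ⟨a, hav, ha, ha'⟩ := hI.other hv1
  obtain ⟨b, hbv, hb, hb'⟩ := hI.other hv2
  obtain ⟨c, hcv, hc, hc'⟩ := hI.other hv3
  obtain ⟨z, hz1, hz2⟩ := (hM e₁ e₂).1 ⟨v, hv1, hv2⟩
  obtain ⟨y, hy1, hy3⟩ := (hM e₁ e₃).1 ⟨v, hv1, hv3⟩
  obtain ⟨x, hx2, hx3⟩ := (hM e₂ e₃).1 ⟨v, hv2, hv3⟩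
  have hab : a ≠ b := fun h => h12 (hI.simple v a e₁ e₂ hav.symm hv1 ha hv2 (h ▸ hb))
  have hac : a ≠ c := fun h => h13 (hI.simple v a e₁ e₃ hav.symm hv1 ha hv3 (h ▸ hc))
  have hbc : b ≠ c := fun h => h23 (hI.simple v b e₂ e₃ hbv.symm hv2 hb hv3 (h ▸ hc))
  have hxy : x ≠ y := by rintro rfl; exact hno x hy1 hx2 hx3
  have hxz : x ≠ z := by rintro rfl; exact hno x hz1 hx2 hx3
  have hyz : y ≠ z := by rintro rfl; exact hno y hy1 hz2 hy3
  refine ⟨v, a, b, c, x, y, z, e₁, e₂, e₃, ⟨h12, h13, h23⟩,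
    ⟨hav.symm, hbv.symm, hcv.symm, hab, hac, hbc⟩, ⟨hxy, hxz, hyz⟩, ?_, ?_, ?_, ?_, ?_, ?_⟩
  · exact fun u => ⟨ha' u, by rintro (rfl | rfl) <;> assumption⟩
  · exact fun u => ⟨hb' u, by rintro (rfl | rfl) <;> assumption⟩
  · exact fun u => ⟨hc' u, by rintro (rfl | rfl) <;> assumption⟩
  · exact fun u => ⟨hJ.endpoints hyz hy1 hz1, by rintro (rfl | rfl) <;> assumption⟩
  · exact fun u => ⟨hJ.endpoints hxz hx2 hz2, by rintro (rfl | rfl) <;> assumption⟩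
  · exact fun u => ⟨hJ.endpoints hxy hx3 hy3, by rintro (rfl | rfl) <;> assumption⟩

variable {v a b c : V} {x y z : W} {e₁ e₂ e₃ : E}

namespace ClawTriangle

lemma swap₁₂ (h : ClawTriangle I J v a b c x y z e₁ e₂ e₃) :
    ClawTriangle I J v b a c y x z e₂ e₁ e₃ := by
  obtain ⟨_, _, _, _, _, _, _, _, _⟩ := h
  constructor <;> grind

lemma swap₂₃ (h : ClawTriangle I J v a b c x y z e₁ e₂ e₃) :
    ClawTriangle I J v a c b x z y e₁ e₃ e₂ := by
  obtain ⟨_, _, _, _, _, _, _, _, _⟩ := h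
  constructor <;> grind

lemma meets₁ (h : ClawTriangle I J v a b c x y z e₁ e₂ e₃) (hM : SameMeet I J) (e : E) :
    (I v e ∨ I a e) ↔ (J y e ∨ J z e) := by
  have := hM e₁ e
  simpa [h.inc₁, h.jnc₁] using this

lemma meets₂ (h : ClawTriangle I J v a b c x y z e₁ e₂ e₃) (hM : SameMeet I J) (e : E) :
    (I v e ∨ I b e) ↔ (J x e ∨ J z e) := by
  simpa using h.swap₁₂.meets₁ hM e

lemma meets₃ (h : ClawTriangle I J v a b c x y z e₁ e₂ e₃) (hM : SameMeet I J) (e : E) :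
    (I v e ∨ I c e) ↔ (J x e ∨ J y e) := by
  simpa using h.swap₂₃.meets₂ hM e

lemma at_most_one (h : ClawTriangle I J v a b c x y z e₁ e₂ e₃) (hJ : EdgeIncidence J) {e : E}
    (he : e ≠ e₁ ∧ e ≠ e₂ ∧ e ≠ e₃) :
    ¬ (J y e ∧ J z e) ∧ ¬ (J x e ∧ J z e) ∧ ¬ (J x e ∧ J y e) := by
  obtain ⟨hxy, hxz, hyz⟩ := h.ne_right
  refine ⟨fun k => he.1 ?_, fun k => he.2.1 ?_, fun k => he.2.2 ?_⟩
  · exact hJ.simple y z _ _ hyz k.1 k.2 ((h.jnc₁ _).2 (by simp)) ((h.jnc₁ _).2 (by simp))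
  · exact hJ.simple x z _ _ hxz k.1 k.2 ((h.jnc₂ _).2 (by simp)) ((h.jnc₂ _).2 (by simp))
  · exact hJ.simple x y _ _ hxy k.1 k.2 ((h.jnc₃ _).2 (by simp)) ((h.jnc₃ _).2 (by simp))

/-- An edge at `v` meets all of `e₁`, `e₂`, `e₃`, hence has two endpoints in the triangle. -/
lemma center_not_mem (h : ClawTriangle I J v a b c x y z e₁ e₂ e₃) (hJ : EdgeIncidence J)
    (hM : SameMeet I J) {e : E} (he : e ≠ e₁ ∧ e ≠ e₂ ∧ e ≠ e₃) : ¬ I v e := by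
  have := h.at_most_one hJ he
  have := h.meets₁ hM e
  have := h.meets₂ hM e
  have := h.meets₃ hM e
  tauto

/-- Further edges meeting the claw are the sides of the triangle `abc`; the side opposite to `a` is
the edge hanging off `x`, and so on. -/
lemma side_of_meets (h : ClawTriangle I J v a b c x y z e₁ e₂ e₃) (hJ : EdgeIncidence J)
    (hM : SameMeet I J) {e : E} (he : e ≠ e₁ ∧ e ≠ e₂ ∧ e ≠ e₃)
    (hmeet : I v e ∨ I a e ∨ I b e ∨ I c e) :
    (I b e ∧ I c e ∧ ¬ I a e ∧ J x e ∧ ¬ J y e ∧ ¬ J z e) ∨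
    (I a e ∧ I c e ∧ ¬ I b e ∧ J y e ∧ ¬ J x e ∧ ¬ J z e) ∨
    (I a e ∧ I b e ∧ ¬ I c e ∧ J z e ∧ ¬ J x e ∧ ¬ J y e) := by
  have h0 := h.center_not_mem hJ hM he
  have h1 := h.meets₁ hM e
  have h2 := h.meets₂ hM e
  have h3 := h.meets₃ hM e
  obtain ⟨k1, k2, k3⟩ := h.at_most_one hJ he
  by_cases jx : J x e <;> by_cases jy : J y e <;> by_cases jz : J z e <;> simp_all

lemma cover_left (h : ClawTriangle I J v a b c x y z e₁ e₂ e₃) (hI : EdgeIncidence I)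
    (hJ : EdgeIncidence J) (hM : SameMeet I J) (u : V) : u = v ∨ u = a ∨ u = b ∨ u = c := by
  refine hI.conn (fun u => u = v ∨ u = a ∨ u = b ∨ u = c) ⟨v, Or.inl rfl⟩ ?_ u
  intro p q e hp hq hP
  by_cases he : e ≠ e₁ ∧ e ≠ e₂ ∧ e ≠ e₃
  · obtain ⟨-, -, -, hab, hac, hbc⟩ := h.ne_left
    have hmeet : I v e ∨ I a e ∨ I b e ∨ I c e := by
      rcases hP with rfl | rfl | rfl | rfl <;> simp [hp]
    rcases h.side_of_meets hJ hM he hmeet with k | k | k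
    · rcases hI.endpoints hbc k.1 k.2.1 hq with rfl | rfl <;> simp
    · rcases hI.endpoints hac k.1 k.2.1 hq with rfl | rfl <;> simp
    · rcases hI.endpoints hab k.1 k.2.1 hq with rfl | rfl <;> simp
  · have h1 := h.inc₁ q
    have h2 := h.inc₂ q
    have h3 := h.inc₃ q
    clear hp hP
    grind

/-- `side_of_meets` without the meeting hypothesis, since the claw covers all vertices. -/
lemma further_edge (h : ClawTriangle I J v a b c x y z e₁ e₂ e₃) (hI : EdgeIncidence I)
    (hJ : EdgeIncidence J) (hM : SameMeet I J) {e : E} (he : e ≠ e₁ ∧ e ≠ e₂ ∧ e ≠ e₃) :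
    (I b e ∧ I c e ∧ ¬ I a e ∧ J x e ∧ ¬ J y e ∧ ¬ J z e) ∨
    (I a e ∧ I c e ∧ ¬ I b e ∧ J y e ∧ ¬ J x e ∧ ¬ J z e) ∨
    (I a e ∧ I b e ∧ ¬ I c e ∧ J z e ∧ ¬ J x e ∧ ¬ J y e) := by
  refine h.side_of_meets hJ hM he ?_
  obtain ⟨p, q, hpq, hx⟩ := hI.two e
  have hp := (hx p).2 (Or.inl rfl)
  rcases h.cover_left hI hJ hM p with rfl | rfl | rfl | rfl <;> simp [hp]

/-- If `bc` is an edge of the claw side, the two graphs are isomorphic: `bc` is an edge `xw` on the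
triangle side, and the isomorphism sends `v, a, b, c` to `x, w, z, y`. -/
lemma equiv_of_side (h : ClawTriangle I J v a b c x y z e₁ e₂ e₃) (hI : EdgeIncidence I)
    (hJ : EdgeIncidence J) (hM : SameMeet I J) {e₄ : E} (hb : I b e₄) (hc : I c e₄) :
    ∃ σ : V ≃ W, ∀ u v, IncAdj I u v ↔ IncAdj J (σ u) (σ v) := by
  have hn := h.ne_left
  obtain ⟨hva, hvb, hvc, nab, nac, nbc⟩ := h.ne_left
  obtain ⟨hxy, hxz, hyz⟩ := h.ne_right
  have h1 := h.inc₁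
  have h2 := h.inc₂
  have h3 := h.inc₃
  have j1 := h.jnc₁
  have j2 := h.jnc₂
  have j3 := h.jnc₃
  have not_spoke : ∀ {e p q}, p ≠ q → p ≠ v → q ≠ v → I p e → I q e →
      e ≠ e₁ ∧ e ≠ e₂ ∧ e ≠ e₃ := by
    intro e p q _ _ _ k l
    refine ⟨?_, ?_, ?_⟩ <;> rintro rfl <;> simp_all
  have hfe := fun {e} he => h.further_edge hI hJ hM (e := e) he
  have he := not_spoke nbc hvb.symm hvc.symm hb hc
  obtain ⟨ha4, hx4, hy4, hz4⟩ : ¬ I a e₄ ∧ J x e₄ ∧ ¬ J y e₄ ∧ ¬ J z e₄ := by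
    rcases hfe he with k | k | k
    · exact k.2.2
    · exact absurd hb k.2.2.1
    · exact absurd hc k.2.2.1
  obtain ⟨w, hwx, hw, hw'⟩ := hJ.other hx4
  have hwy : w ≠ y := by rintro rfl; exact hy4 hw
  have hwz : w ≠ z := by rintro rfl; exact hz4 hw
  -- Every further edge other than `e₄` meets `e₄` but avoids `x`, hence ends in `w`.
  have h5 : ∀ e, e ≠ e₁ ∧ e ≠ e₂ ∧ e ≠ e₃ → J w e := by
    intro e hee
    rcases hfe hee with k | k | k
    · rwa [hI.simple b c e e₄ nbc k.1 k.2.1 hb hc]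
    · obtain ⟨u, hu, hu'⟩ := (hM e₄ e).1 ⟨c, hc, k.2.1⟩
      rcases hw' u hu with rfl | rfl
      · exact absurd hu' k.2.2.2.2.1
      · exact hu'
    · obtain ⟨u, hu, hu'⟩ := (hM e₄ e).1 ⟨b, hb, k.2.1⟩
      rcases hw' u hu with rfl | rfl
      · exact absurd hu' k.2.2.2.2.1
      · exact hu'
  have not_triangle : ∀ {e}, J w e → e ≠ e₁ ∧ e ≠ e₂ ∧ e ≠ e₃ := by
    intro e k
    refine ⟨?_, ?_, ?_⟩ <;> rintro rfl <;> simp_all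
  have hcov : ∀ u, u = x ∨ u = w ∨ u = z ∨ u = y := by
    intro u
    refine hJ.conn (fun u => u = x ∨ u = w ∨ u = z ∨ u = y) ⟨x, Or.inl rfl⟩ ?_ u
    intro p q e _ hq _
    by_cases he : e ≠ e₁ ∧ e ≠ e₂ ∧ e ≠ e₃
    · have hwe := h5 e he
      rcases hfe he with k | k | k
      · rcases hJ.endpoints hwx.symm k.2.2.2.1 hwe hq with rfl | rfl <;> simp
      · rcases hJ.endpoints hwy.symm k.2.2.2.1 hwe hq with rfl | rfl <;> simp
      · rcases hJ.endpoints hwz.symm k.2.2.2.1 hwe hq with rfl | rfl <;> simp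
    · have he' : e = e₁ ∨ e = e₂ ∨ e = e₃ := by
        by_contra! hcon
        exact he hcon
      rcases he' with rfl | rfl | rfl
      · rcases (j1 q).1 hq with rfl | rfl <;> simp
      · rcases (j2 q).1 hq with rfl | rfl <;> simp
      · rcases (j3 q).1 hq with rfl | rfl <;> simp
  have hab : IncAdj I a b ↔ IncAdj J w z := by
    constructor
    · rintro ⟨_, e, k, l⟩
      have he := not_spoke nab hva.symm hvb.symm k l
      refine ⟨hwz, e, h5 e he, ?_⟩
      rcases hfe he with m | m | m <;> simp_all
    · rintro ⟨_, e, k, l⟩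
      refine ⟨nab, e, ?_⟩
      rcases hfe (not_triangle k) with m | m | m <;> simp_all
  have hac : IncAdj I a c ↔ IncAdj J w y := by
    constructor
    · rintro ⟨_, e, k, l⟩
      have he := not_spoke nac hva.symm hvc.symm k l
      refine ⟨hwy, e, h5 e he, ?_⟩
      rcases hfe he with m | m | m <;> simp_all
    · rintro ⟨_, e, k, l⟩
      refine ⟨nac, e, ?_⟩
      rcases hfe (not_triangle k) with m | m | m <;> simp_all
  have adj : ∀ {V : Type} {I : V → E → Prop} {p q : V} (e : E), p ≠ q → I p e → I q e →
      (IncAdj I p q ∧ IncAdj I q p) := fun e h k l => ⟨⟨h, e, k, l⟩, ⟨h.symm, e, l, k⟩⟩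
  have irr : ∀ {V : Type} {I : V → E → Prop} (p : V), ¬ IncAdj I p p := fun p h => h.1 rfl
  have sym : ∀ {V : Type} {I : V → E → Prop} (p q : V), IncAdj I p q ↔ IncAdj I q p :=
    fun p q => ⟨fun ⟨h, e, k, l⟩ => ⟨h.symm, e, l, k⟩, fun ⟨h, e, k, l⟩ => ⟨h.symm, e, l, k⟩⟩
  have a1 := adj (I := I) e₁ hva ((h1 v).2 (.inl rfl)) ((h1 a).2 (.inr rfl))
  have a2 := adj (I := I) e₂ hvb ((h2 v).2 (.inl rfl)) ((h2 b).2 (.inr rfl))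
  have a3 := adj (I := I) e₃ hvc ((h3 v).2 (.inl rfl)) ((h3 c).2 (.inr rfl))
  have a4 := adj (I := I) e₄ nbc hb hc
  have b1 := adj (I := J) e₄ hwx.symm hx4 hw
  have b2 := adj (I := J) e₂ hxz ((j2 x).2 (.inl rfl)) ((j2 z).2 (.inr rfl))
  have b3 := adj (I := J) e₃ hxy ((j3 x).2 (.inl rfl)) ((j3 y).2 (.inr rfl))
  have b4 := adj (I := J) e₁ hyz.symm ((j1 z).2 (.inr rfl)) ((j1 y).2 (.inl rfl))
  have hba := (sym b a).trans (hab.trans (sym w z))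
  have hca := (sym c a).trans (hac.trans (sym w y))
  refine equiv_of_labels ![v, a, b, c] ![x, w, z, y] (bijective_vec4 hn (h.cover_left hI hJ hM))
    (bijective_vec4 ⟨hwx.symm, hxz, hxy, hwz, hwy, hyz.symm⟩ hcov) ?_
  intro i j
  fin_cases i <;> fin_cases j <;> simp [a1, a2, a3, a4, b1, b2, b3, b4, irr, hab, hac, hba, hca]

end ClawTriangle

/-- If some claw on the `I` side is a triangle on the `J` side, the graphs are isomorphic or they
are `K₁,₃` and `K₃`. -/
theorem equiv_or_exception (hI : EdgeIncidence I) (hJ : EdgeIncidence J) (hM : SameMeet I J)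
    (h1 : ¬ StarsToStars I J) :
    (∃ σ : V ≃ W, ∀ u v, IncAdj I u v ↔ IncAdj J (σ u) (σ v)) ∨
    ((∃ σ : V ≃ (Fin 1 ⊕ Fin 3), ∀ u v, IncAdj I u v ↔
        (completeBipartiteGraph (Fin 1) (Fin 3)).Adj (σ u) (σ v)) ∧
      ∃ σ : W ≃ Fin 3, ∀ u v, IncAdj J u v ↔ (⊤ : SimpleGraph (Fin 3)).Adj (σ u) (σ v)) := by
  obtain ⟨v, a, b, c, x, y, z, e₁, e₂, e₃, h⟩ := exists_clawTriangle hI hJ hM h1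
  by_cases hex : ∃ e, e ≠ e₁ ∧ e ≠ e₂ ∧ e ≠ e₃
  · left
    obtain ⟨e, he⟩ := hex
    rcases h.further_edge hI hJ hM he with k | k | k
    · exact h.equiv_of_side hI hJ hM k.1 k.2.1
    · exact h.swap₁₂.equiv_of_side hI hJ hM k.1 k.2.1
    · exact h.swap₂₃.swap₁₂.equiv_of_side hI hJ hM k.1 k.2.1
  right
  have hE : ∀ e, e = e₁ ∨ e = e₂ ∨ e = e₃ := by
    intro e
    by_contra! hcon
    exact hex ⟨e, hcon⟩
  have hn := h.ne_left
  have hm := h.ne_right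
  have hIadj : ∀ p q, IncAdj I p q ↔
      p ≠ q ∧ (I p e₁ ∧ I q e₁ ∨ I p e₂ ∧ I q e₂ ∨ I p e₃ ∧ I q e₃) := by
    refine fun p q => and_congr_right fun _ => ⟨?_, ?_⟩
    · rintro ⟨e, k⟩
      rcases hE e with rfl | rfl | rfl <;> simp [k]
    · rintro (k | k | k)
      exacts [⟨_, k⟩, ⟨_, k⟩, ⟨_, k⟩]
  have hJadj : ∀ p q, IncAdj J p q ↔
      p ≠ q ∧ (J p e₁ ∧ J q e₁ ∨ J p e₂ ∧ J q e₂ ∨ J p e₃ ∧ J q e₃) := by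
    refine fun p q => and_congr_right fun _ => ⟨?_, ?_⟩
    · rintro ⟨e, k⟩
      rcases hE e with rfl | rfl | rfl <;> simp [k]
    · rintro (k | k | k)
      exacts [⟨_, k⟩, ⟨_, k⟩, ⟨_, k⟩]
  simp only [h.inc₁, h.inc₂, h.inc₃] at hIadj
  simp only [h.jnc₁, h.jnc₂, h.jnc₃] at hJadj
  constructor
  · refine equiv_of_labels ![v, a, b, c] ![Sum.inl 0, Sum.inr 0, Sum.inr 1, Sum.inr 2]
      (bijective_vec4 hn (h.cover_left hI hJ hM)) (by decide) ?_
    intro i j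
    rw [hIadj]
    fin_cases i <;> fin_cases j <;> simp <;> grind
  · refine equiv_of_labels ![x, y, z] id (bijective_vec3 hm ?_) Function.bijective_id ?_
    · refine hJ.conn (fun u => u = x ∨ u = y ∨ u = z) ⟨x, Or.inl rfl⟩ ?_
      intro p q e _ hq _
      rcases hE e with rfl | rfl | rfl
      · rcases (h.jnc₁ q).1 hq with rfl | rfl <;> simp
      · rcases (h.jnc₂ q).1 hq with rfl | rfl <;> simp
      · rcases (h.jnc₃ q).1 hq with rfl | rfl <;> simp
    · intro i j
      rw [hJadj]
      fin_cases i <;> fin_cases j <;> simp <;> grind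

/-! ### From graphs to incidences -/

/-- The incidence relation of a connected graph, with its edges relabelled along `φ`. -/
lemma edgeIncidence_of_connected {G : SimpleGraph V} (hG : G.Connected) (φ : E ≃ G.edgeSet) :
    EdgeIncidence (fun (v : V) (e : E) => v ∈ (φ e : Sym2 V)) where
  two e := by
    obtain ⟨s, hs⟩ := φ e
    induction s with
    | _ p q => exact ⟨p, q, G.ne_of_adj hs, fun x => by simp⟩
  simple u v e f huv h1 h2 h3 h4 := by
    apply φ.injective
    apply Subtype.ext
    rw [(Sym2.mem_and_mem_iff huv).1 ⟨h1, h2⟩, (Sym2.mem_and_mem_iff huv).1 ⟨h3, h4⟩]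
  conn P hP hstep v := by
    obtain ⟨u, hu⟩ := hP
    obtain ⟨p⟩ := hG.preconnected u v
    induction p with
    | nil => exact hu
    | cons hadj p ih =>
      refine ih (hstep _ _ (φ.symm ⟨s(_, _), hadj⟩) ?_ ?_ hu) <;> simp
  nonempty := hG.nonempty

lemma incAdj_iff {G : SimpleGraph V} (φ : E ≃ G.edgeSet) (u v : V) :
    IncAdj (fun (v : V) (e : E) => v ∈ (φ e : Sym2 V)) u v ↔ G.Adj u v := by
  constructor
  · rintro ⟨hne, e, h⟩
    have := (φ e).2
    rwa [(Sym2.mem_and_mem_iff hne).1 h] at this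
  · intro h
    exact ⟨G.ne_of_adj h, φ.symm ⟨s(u, v), h⟩, by simp⟩

lemma sameMeet_of_iso {G : SimpleGraph V} {H : SimpleGraph W} (φ : G.lineGraph ≃g H.lineGraph) :
    SameMeet (fun (v : V) (e : G.edgeSet) => v ∈ (Equiv.refl _ e : Sym2 V))
      (fun (w : W) (e : G.edgeSet) => w ∈ (φ.toEquiv e : Sym2 W)) := by
  intro e f
  by_cases hef : e = f
  · subst hef
    have h1 := Sym2.out_fst_mem (e : Sym2 V)
    have h2 := Sym2.out_fst_mem (φ.toEquiv e : Sym2 W)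
    -- an edge always meets itself, although the line graph has no loops
    exact ⟨fun _ => ⟨_, h2, h2⟩, fun _ => ⟨_, h1, h1⟩⟩
  · have := φ.map_adj_iff (v := e) (w := f)
    rw [lineGraph_adj_iff_exists, lineGraph_adj_iff_exists] at this
    have hne : φ e ≠ φ f := fun h => hef (φ.injective h)
    simpa [hef, hne] using this.symm

end Whitney

open Whitney

/-- **Whitney's theorem.** If two connected finite simple graphs have isomorphic line graphs,
then the graphs themselves are isomorphic, except when one of them is the triangle `K₃` and
the other is the star `K₁,₃`. -/
theorem stmt_6 {V W : Type} [Fintype V] [Fintype W]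
    (G : SimpleGraph V) (H : SimpleGraph W)
    (hG : G.Connected) (hH : H.Connected)
    (hline : Nonempty (G.lineGraph ≃g H.lineGraph)) :
    Nonempty (G ≃g H) ∨
      ((Nonempty (G ≃g (⊤ : SimpleGraph (Fin 3))) ∧
          Nonempty (H ≃g completeBipartiteGraph (Fin 1) (Fin 3))) ∨
        (Nonempty (G ≃g completeBipartiteGraph (Fin 1) (Fin 3)) ∧
          Nonempty (H ≃g (⊤ : SimpleGraph (Fin 3))))) := by
  obtain ⟨φ⟩ := hline
  have hI := edgeIncidence_of_connected hG (Equiv.refl _)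
  have hJ := edgeIncidence_of_connected hH φ.toEquiv
  have hM := sameMeet_of_iso φ
  have toIso : ∀ {V W : Type} {A : SimpleGraph V} {B : SimpleGraph W},
      (∃ σ : V ≃ W, ∀ u v, A.Adj u v ↔ B.Adj (σ u) (σ v)) → Nonempty (A ≃g B) :=
    fun ⟨σ, h⟩ => ⟨⟨σ, fun {u v} => (h u v).symm⟩⟩
  by_cases h1 : StarsToStars (fun (v : V) (e : G.edgeSet) => v ∈ (Equiv.refl _ e : Sym2 V))
      (fun (w : W) (e : G.edgeSet) => w ∈ (φ.toEquiv e : Sym2 W))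
  · by_cases h2 : StarsToStars (fun (w : W) (e : G.edgeSet) => w ∈ (φ.toEquiv e : Sym2 W))
        (fun (v : V) (e : G.edgeSet) => v ∈ (Equiv.refl _ e : Sym2 V))
    · have := exists_equiv_of_stars hI hJ hM h1 h2
      simp only [incAdj_iff] at this
      exact Or.inl (toIso this)
    · have := equiv_or_exception hJ hI hM.symm h2
      simp only [incAdj_iff] at this
      rcases this with h | ⟨h, h'⟩
      · obtain ⟨ψ⟩ := toIso h
        exact Or.inl ⟨ψ.symm⟩
      · exact Or.inr (Or.inl ⟨toIso h', toIso h⟩)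
  · have := equiv_or_exception hI hJ hM h1
    simp only [incAdj_iff] at this
    rcases this with h | ⟨h, h'⟩
    · exact Or.inl (toIso h)
    · exact Or.inr (Or.inr ⟨toIso h, toIso h'⟩)
end

section
/- Graph autoencoder-style link representations are not most expressive structural link representations: in the path graph P₄ on vertices {0, 1, 2, 3} with edges {0,1}, {1,2}, {2,3}, for every type X, every function h from the vertices of P₄ to X satisfying h(u) = h(v) whenever the singletons {u} and {v} are set-isomorphic in P₄, every type Y, and every aggregation function AGG : X × X → Y, one has AGG(h(0), h(1)) = AGG(h(3), h(1)), even though the vertex pairs {0, 1} and {3, 1} are not set-isomorphic in P₄. Hence the pair representation (u, v) ↦ AGG(h(u), h(v)) assigns equal values to two vertex pairs that are not set-isomorphic, so it is not a most expressive structural link representation. -/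
/-!
The reflection of the path exchanges its endpoints `0` and `3`, so an invariant `h` cannot tell
them apart, and neither can anything computed from `h`. An automorphism taking `{0, 1}` to
`{3, 1}` would take an edge to a non-edge, since `1` and `3` are not adjacent.
-/

open SimpleGraph

/-- Graph autoencoder-style link representations are not most expressive structural link
representations: in the path graph `P₄`, for any per-vertex representation `h` that is
invariant on set-isomorphism classes of single vertices and any aggregation function `AGG`,
we get `AGG (h 0, h 1) = AGG (h 3, h 1)`, even though the vertex pairs `{0, 1}` and `{3, 1}`
are not set-isomorphic in `P₄`. -/
theorem stmt_11 :
    (∀ (X : Type*) (h : Fin 4 → X),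
        (∀ u v : Fin 4,
            (∃ π : pathGraph 4 ≃g pathGraph 4,
                ⇑π '' ({u} : Set (Fin 4)) = ({v} : Set (Fin 4))) → h u = h v) →
        ∀ (Y : Type*) (AGG : X × X → Y), AGG (h 0, h 1) = AGG (h 3, h 1)) ∧
    ¬ ∃ π : pathGraph 4 ≃g pathGraph 4,
        (⇑π '' ({0, 1} : Set (Fin 4)) = ({3, 1} : Set (Fin 4))) := by
  constructor
  · intro X h hinv Y AGG
    -- The reflection `i ↦ 3 - i` is an automorphism carrying `0` to `3`.
    have h03 : h 0 = h 3 := by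
      refine hinv 0 3 ⟨⟨Fin.revPerm, ?_⟩, ?_⟩
      · intro a b
        simp only [pathGraph_adj, Fin.revPerm_apply, Fin.val_rev]
        omega
      · rw [Set.image_singleton]
        rfl
    rw [h03]
  · rintro ⟨π, hπ⟩
    -- `0` and `1` are adjacent, whereas no two elements of `{3, 1}` are.
    have hadj : (pathGraph 4).Adj (π 0) (π 1) :=
      π.map_adj_iff.2 (by simp [pathGraph_adj])
    have h0 : π 0 ∈ ({3, 1} : Set (Fin 4)) := hπ ▸ Set.mem_image_of_mem π (by simp)
    have h1 : π 1 ∈ ({3, 1} : Set (Fin 4)) := hπ ▸ Set.mem_image_of_mem π (by simp)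
    rcases h0 with h0 | h0 <;> rcases h1 with h1 | h1 <;>
      rw [h0, h1] at hadj <;> simp [pathGraph_adj] at hadj
end
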